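/- arXiv:1005.0181 — 2 statements merged into one kernel-verified Lean document; each statement's English description precedes it below -/
import Mathlib

section
/- Let V : ℤ → ℝ be p̃-periodic (p̃ ≥ 1) with Schrödinger operator H, let E ∈ ℝ satisfy (E : ℂ) ∉ σ(H), and let c ∈ ℝ. For integers m, h ≥ 1 let V̂_{m,h} be the (m+h)·p̃-periodic potential defined by V̂_{m,h}(n) = V(n) if n mod (m+h)·p̃ ∈ [0, m·p̃ − 1], and V̂_{m,h}(n) = V(n) − c if n mod (m+h)·p̃ ∈ [m·p̃, (m+h)·p̃ − 1]. Define ℓ(E,W) = limsup_{N→∞} (1/N)·log‖A_N(E,W)‖ for a potential W. Then there exists h ∈ {1,2} such that ℓ(E, V̂_{m,h}) → ℓ(E, V) as m → ∞. -/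
open Filter Matrix

/-- The transfer matrix `A_N(E,V) = ∏_{n=1}^N [[E − V(N−n), −1],[1,0]]`,
with the `n = 1` factor leftmost. -/
noncomputable def transferMatrix (V : ℤ → ℝ) (E : ℝ) (N : ℕ) : Matrix (Fin 2) (Fin 2) ℝ :=
  (((List.range N).map
    (fun n => !![E - V ((N : ℤ) - ((n : ℤ) + 1)), -1; (1 : ℝ), 0])).prod)

/-- Operator norm (Euclidean, i.e. ℓ²→ℓ²) of a 2×2 real matrix. -/
noncomputable def opNorm (A : Matrix (Fin 2) (Fin 2) ℝ) : ℝ :=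
  ‖LinearMap.toContinuousLinearMap (Matrix.toEuclideanLin A)‖

/-- `H` is a Schrödinger operator on `ℓ²(ℤ,ℂ)` with potential `V`. -/
def IsSchrodingerOp (V : ℤ → ℝ)
    (H : lp (fun _ : ℤ => ℂ) 2 →L[ℂ] lp (fun _ : ℤ => ℂ) 2) : Prop :=
  ∀ ψ : lp (fun _ : ℤ => ℂ) 2, ∀ n : ℤ,
    H ψ n = ψ (n + 1) + ψ (n - 1) + (V n : ℂ) * ψ n

/-- `V` is `p`-periodic. -/
def IsPeriodic (V : ℤ → ℝ) (p : ℕ) : Prop :=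
  ∀ n : ℤ, V (n + (p : ℤ)) = V n

/-- `V` is limit-periodic: a uniform limit of periodic potentials. -/
def IsLimitPeriodic (V : ℤ → ℝ) : Prop :=
  ∃ (W : ℕ → ℤ → ℝ) (p : ℕ → ℕ),
    (∀ k, 1 ≤ p k ∧ IsPeriodic (W k) (p k)) ∧
    (∀ ε > (0 : ℝ), ∃ K : ℕ, ∀ k ≥ K, ∀ n : ℤ, |V n - W k n| ≤ ε)

/-- `(1/N)·log‖A_N(E,V)‖`. -/
noncomputable def logNormRate (V : ℤ → ℝ) (E : ℝ) (N : ℕ) : ℝ :=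
  (1 / (N : ℝ)) * Real.log (opNorm (transferMatrix V E N))

/-- Individual (upper) Lyapunov exponent `limsup_N (1/N) log‖A_N(E,V)‖`. -/
noncomputable def lyapExp (V : ℤ → ℝ) (E : ℝ) : ℝ :=
  Filter.limsup (fun N : ℕ => logNormRate V E N) Filter.atTop

/-- Bottom of the (real trace of the) spectrum of `H`. -/
noncomputable def specInf (H : lp (fun _ : ℤ => ℂ) 2 →L[ℂ] lp (fun _ : ℤ => ℂ) 2) : ℝ :=
  sInf {x : ℝ | (x : ℂ) ∈ spectrum ℂ H}

/-!
If `E` lies outside the spectrum, the monodromy matrix `T` of `V` over one period satisfies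
`2 < |tr T|`: otherwise a column of the resolvent, sampled once per period, would obey
`x (k + 2) = tr T * x (k + 1) - x k` on either side of the source, and with `|tr T| ≤ 2` the only
decaying solution of this recurrence is zero. Hence `T` has eigenvalues `μ` and `μ⁻¹` with
`1 < |μ|`, the Lyapunov exponent of `V` is `log |μ| / p`, and `T ^ m` is asymptotic to `μ ^ m • P`
with `P` the projection onto the expanding line.

The monodromy matrix of `V̂_{m,h}` is `B ^ h * T ^ m`, with `B` that of the inserted potential. When
`tr (B ^ h * P) ≠ 0`, the logarithm of its trace is `m * log |μ| + O(1)`, so dividing by the period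
`(m + h) * p` gives the limit `log |μ| / p`. Cayley–Hamilton gives
`tr (B ^ 2 * P) = tr B * tr (B * P) - 1`, so this trace is nonzero for `h = 1` or for `h = 2`.
-/

section FinTwo

variable {R : Type*} [CommRing R]

lemma mul_self_eq_trace_smul_sub_det_smul_one (A : Matrix (Fin 2) (Fin 2) R) :
    A * A = A.trace • A - A.det • 1 := by
  ext i j
  fin_cases i <;> fin_cases j <;>
    simp [Matrix.mul_apply, Matrix.trace_fin_two, Matrix.det_fin_two] <;> ring

lemma exists_trace_pow_mul_ne_zero [NoZeroDivisors R] {A P : Matrix (Fin 2) (Fin 2) R}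
    (hA : A.det ≠ 0) (hP : P.trace ≠ 0) : ∃ h ∈ ({1, 2} : Set ℕ), (A ^ h * P).trace ≠ 0 := by
  by_contra! hzero
  have h1 : (A * P).trace = 0 := by simpa using hzero 1 (by simp)
  have h2 : (A * A * P).trace = 0 := by simpa [pow_two] using hzero 2 (by simp)
  rw [mul_self_eq_trace_smul_sub_det_smul_one, Matrix.sub_mul, Matrix.smul_mul, Matrix.smul_mul,
    Matrix.one_mul, Matrix.trace_sub, Matrix.trace_smul, Matrix.trace_smul, h1, smul_zero, zero_sub,
    neg_eq_zero, smul_eq_mul] at h2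
  exact mul_ne_zero hA hP h2

end FinTwo

section EigenProj

variable {K : Type*} [Field K] {T : Matrix (Fin 2) (Fin 2) K} {μ ν : K}

/-- The projection onto the `μ`-eigenline along the `ν`-eigenline of a `2 × 2` matrix `T` with
distinct eigenvalues `μ` and `ν`. -/
def eigenProj (T : Matrix (Fin 2) (Fin 2) K) (μ ν : K) : Matrix (Fin 2) (Fin 2) K :=
  (μ - ν)⁻¹ • (T - ν • 1)

lemma eigenProj_add_eigenProj_swap (hne : μ ≠ ν) : eigenProj T μ ν + eigenProj T ν μ = 1 := by
  have hsub : μ - ν ≠ 0 := sub_ne_zero.mpr hne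
  calc eigenProj T μ ν + eigenProj T ν μ
      = (μ - ν)⁻¹ • ((T - ν • 1) - (T - μ • 1)) := by
        rw [eigenProj, eigenProj, ← neg_sub μ ν, inv_neg, neg_smul, ← sub_eq_add_neg, ← smul_sub]
    _ = (μ - ν)⁻¹ • ((μ - ν) • 1) := by congr 1; module
    _ = 1 := inv_smul_smul₀ hsub 1

lemma trace_eigenProj (hne : μ ≠ ν) (hsum : μ + ν = T.trace) : (eigenProj T μ ν).trace = 1 := by
  have hsub : μ - ν ≠ 0 := sub_ne_zero.mpr hne
  rw [eigenProj, Matrix.trace_smul, Matrix.trace_sub, Matrix.trace_smul, Matrix.trace_one,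
    ← hsum, smul_eq_mul, inv_mul_eq_one₀ hsub, Fintype.card_fin, smul_eq_mul, Nat.cast_ofNat]
  ring

lemma mul_eigenProj (hsum : μ + ν = T.trace) (hprod : μ * ν = T.det) :
    T * eigenProj T μ ν = μ • eigenProj T μ ν := by
  have hshift : T * (T - ν • 1) = μ • (T - ν • 1) := by
    rw [Matrix.mul_sub, mul_self_eq_trace_smul_sub_det_smul_one, ← hsum, ← hprod, Matrix.mul_smul,
      Matrix.mul_one]
    module
  rw [eigenProj, Matrix.mul_smul, hshift, smul_comm]

lemma pow_eq_smul_eigenProj_add (hne : μ ≠ ν) (hsum : μ + ν = T.trace) (hprod : μ * ν = T.det)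
    (k : ℕ) : T ^ k = μ ^ k • eigenProj T μ ν + ν ^ k • eigenProj T ν μ := by
  induction k with
  | zero => simp [eigenProj_add_eigenProj_swap hne]
  | succ k ih =>
    rw [pow_succ', ih, Matrix.mul_add, Matrix.mul_smul, Matrix.mul_smul, mul_eigenProj hsum hprod,
      mul_eigenProj (by rwa [add_comm]) (by rwa [mul_comm]), smul_smul, smul_smul, pow_succ,
      pow_succ]

end EigenProj

section Asymptotics

open Topology Asymptotics

lemma tendsto_log_norm_map_pow_sub {𝕜 F : Type*} [NormedField 𝕜] [NormedAddCommGroup F]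
    [NormedSpace 𝕜 F] {T : Matrix (Fin 2) (Fin 2) 𝕜} {μ ν : 𝕜} (hsum : μ + ν = T.trace)
    (hprod : μ * ν = T.det) (hlt : ‖ν‖ < ‖μ‖) (f : Matrix (Fin 2) (Fin 2) 𝕜 →ₗ[𝕜] F)
    (hf : f (eigenProj T μ ν) ≠ 0) :
    Tendsto (fun k : ℕ => Real.log ‖f (T ^ k)‖ - k * Real.log ‖μ‖) atTop
      (𝓝 (Real.log ‖f (eigenProj T μ ν)‖)) := by
  have hμ : μ ≠ 0 := norm_pos_iff.mp ((norm_nonneg ν).trans_lt hlt)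
  have hne : μ ≠ ν := by rintro rfl; exact lt_irrefl _ hlt
  let y : ℕ → F := fun k => f (eigenProj T μ ν) + (ν / μ) ^ k • f (eigenProj T ν μ)
  have hy : Tendsto y atTop (𝓝 (f (eigenProj T μ ν))) := by
    have hratio : ‖ν / μ‖ < 1 := by rwa [norm_div, div_lt_one (norm_pos_iff.mpr hμ)]
    simpa using ((tendsto_pow_atTop_nhds_zero_of_norm_lt_one hratio).smul_const
      (f (eigenProj T ν μ))).const_add (f (eigenProj T μ ν))
  have hfactor (k : ℕ) : f (T ^ k) = μ ^ k • y k := by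
    rw [pow_eq_smul_eigenProj_add hne hsum hprod, map_add, map_smul, map_smul, smul_add, smul_smul,
      div_pow, mul_div_cancel₀ _ (pow_ne_zero k hμ)]
  refine ((Real.continuousAt_log (norm_ne_zero_iff.mpr hf)).tendsto.comp hy.norm).congr' ?_
  filter_upwards [hy.eventually_ne hf] with k hk
  rw [hfactor, norm_smul, norm_pow, Function.comp_apply,
    Real.log_mul (pow_ne_zero k (norm_ne_zero_iff.mpr hμ)) (norm_ne_zero_iff.mpr hk), Real.log_pow]
  ring

lemma tendsto_div_of_sub_isBigO_one {α : Type*} {l : Filter α} {a b : α → ℝ} {L : ℝ}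
    (hb : Tendsto b l atTop) (h : (fun x => a x - L * b x) =O[l] fun _ => (1 : ℝ)) :
    Tendsto (fun x => a x / b x) l (𝓝 L) := by
  have hsmall : (fun x => a x - L * b x) =o[l] b :=
    h.trans_isLittleO ((isLittleO_one_left_iff ℝ).mpr (tendsto_norm_atTop_atTop.comp hb))
  have hlim := hsmall.tendsto_div_nhds_zero.add_const L
  rw [zero_add] at hlim
  refine hlim.congr' ?_
  filter_upwards [hb.eventually_ne_atTop 0] with x hx
  field_simp
  ring

end Asymptotics

section RealQuadratic

open Topology

lemma exists_one_lt_abs_add_inv_eq {t : ℝ} (ht : 2 < |t|) : ∃ μ : ℝ, 1 < |μ| ∧ μ + μ⁻¹ = t := by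
  wlog hpos : 0 < t generalizing t
  · have hneg : t < 0 := (not_lt.mp hpos).lt_of_ne (by rintro rfl; norm_num at ht)
    obtain ⟨μ, hμ, hsum⟩ := this (by rwa [abs_neg]) (neg_pos.mpr hneg)
    exact ⟨-μ, by rwa [abs_neg], by rw [inv_neg, ← neg_add, hsum, neg_neg]⟩
  rw [abs_of_pos hpos] at ht
  have hsqrt : √(t ^ 2 - 4) ^ 2 = t ^ 2 - 4 := Real.sq_sqrt (by nlinarith)
  have hsqrt_nonneg : 0 ≤ √(t ^ 2 - 4) := Real.sqrt_nonneg _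
  have hlarge : 1 < (t + √(t ^ 2 - 4)) / 2 := by linarith
  refine ⟨(t + √(t ^ 2 - 4)) / 2, hlarge.trans_le (le_abs_self _), ?_⟩
  have hne : t + √(t ^ 2 - 4) ≠ 0 := by linarith
  field_simp
  linarith

lemma abs_inv_lt_abs {μ : ℝ} (hμ : 1 < |μ|) : |μ⁻¹| < |μ| :=
  (abs_inv μ).trans_lt ((inv_lt_one_of_one_lt₀ hμ).trans hμ)

lemma ne_inv_of_one_lt_abs {μ : ℝ} (hμ : 1 < |μ|) : μ ≠ μ⁻¹ :=
  fun h => (abs_inv_lt_abs hμ).ne (congrArg abs h.symm)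

lemma abs_le_abs_add_inv (μ : ℝ) : |μ| ≤ |μ + μ⁻¹| := by
  rcases eq_or_ne μ 0 with rfl | hμ
  · simp
  · have := mul_inv_cancel₀ hμ
    exact sq_le_sq.mp (by nlinarith [sq_nonneg μ⁻¹])

lemma eq_zero_of_linear_recurrence_of_tendsto_zero {t : ℝ} (ht : |t| ≤ 2) {x : ℕ → ℝ}
    (hx : ∀ k, x (k + 2) = t * x (k + 1) - x k) (h0 : Tendsto x atTop (𝓝 0)) : x 0 = 0 := by
  -- `Q` is conserved, hence zero; being semidefinite, it then forces `x (k + 1) ^ 2 = x k ^ 2`.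
  let Q : ℕ → ℝ := fun k => x (k + 1) ^ 2 - t * x (k + 1) * x k + x k ^ 2
  have h1 : Tendsto (fun k => x (k + 1)) atTop (𝓝 0) := h0.comp (tendsto_add_atTop_nat 1)
  have hQ_const (k : ℕ) : Q k = Q 0 := by
    induction k with
    | zero => rfl
    | succ k ih => rw [← ih]; simp only [Q]; rw [hx k]; ring
  have hQ_lim : Tendsto Q atTop (𝓝 0) := by
    simpa using ((h1.pow 2).sub ((h1.const_mul t).mul h0)).add (h0.pow 2)
  have hQ_zero (k : ℕ) : Q k = 0 :=
    (hQ_const k).trans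
      (tendsto_nhds_unique (tendsto_const_nhds.congr fun j => (hQ_const j).symm) hQ_lim)
  have hsemi : 0 ≤ 1 - (t / 2) ^ 2 := by
    have := sq_le_sq.mpr (ht.trans_eq abs_two.symm)
    linarith
  have hsq_const (k : ℕ) : x k ^ 2 = x 0 ^ 2 := by
    induction k with
    | zero => rfl
    | succ k ih =>
      have hsum : (x (k + 1) - t / 2 * x k) ^ 2 + (1 - (t / 2) ^ 2) * x k ^ 2 = 0 := by
        linear_combination hQ_zero k
      obtain ⟨hfst, hsnd⟩ := (add_eq_zero_iff_of_nonneg (sq_nonneg _)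
        (mul_nonneg hsemi (sq_nonneg _))).mp hsum
      rw [← ih, sub_eq_zero.mp (pow_eq_zero_iff two_ne_zero |>.mp hfst)]
      linear_combination -hsnd
  have hsq_zero : x 0 ^ 2 = 0 := by
    simpa using tendsto_nhds_unique
      (tendsto_const_nhds.congr fun k => (hsq_const k).symm) (h0.pow 2)
  exact pow_eq_zero_iff two_ne_zero |>.mp hsq_zero

end RealQuadratic

section TransferMatrix

variable {V W : ℤ → ℝ} {E : ℝ} {p : ℕ}

lemma transferMatrix_zero (V : ℤ → ℝ) (E : ℝ) : transferMatrix V E 0 = 1 := by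
  simp [transferMatrix]

lemma transferMatrix_succ (V : ℤ → ℝ) (E : ℝ) (N : ℕ) :
    transferMatrix V E (N + 1) = !![E - V N, -1; 1, 0] * transferMatrix V E N := by
  -- In `transferMatrix` the list `List.range N` is coerced to `List ℤ` by a monadic bind.
  simp only [transferMatrix, bind_pure_comp, List.map_eq_map, List.map_map]
  rw [List.range_succ_eq_map, List.map_cons, List.prod_cons, List.map_map]
  congr 1
  · simp
  · congr 2
    funext n
    simp

lemma det_transferMatrix (V : ℤ → ℝ) (E : ℝ) (N : ℕ) : (transferMatrix V E N).det = 1 := by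
  induction N with
  | zero => rw [transferMatrix_zero, Matrix.det_one]
  | succ N ih => rw [transferMatrix_succ, Matrix.det_mul, ih, Matrix.det_fin_two_of]; ring

lemma transferMatrix_congr {N : ℕ} (h : ∀ n : ℕ, n < N → V n = W n) :
    transferMatrix V E N = transferMatrix W E N := by
  induction N with
  | zero => rw [transferMatrix_zero, transferMatrix_zero]
  | succ N ih =>
    rw [transferMatrix_succ, transferMatrix_succ, ih fun n hn => h n (by omega), h N (by omega)]

lemma transferMatrix_add (V : ℤ → ℝ) (E : ℝ) (a b : ℕ) :
    transferMatrix V E (a + b) =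
      transferMatrix (fun n => V (a + n)) E b * transferMatrix V E a := by
  induction b with
  | zero => rw [transferMatrix_zero, Matrix.one_mul, add_zero]
  | succ b ih => rw [← add_assoc, transferMatrix_succ, transferMatrix_succ, ih, Matrix.mul_assoc,
      Nat.cast_add]

namespace IsPeriodic

lemma mul_add_eq (hV : IsPeriodic V p) (j n : ℤ) : V (j * p + n) = V n := by
  rw [add_comm]
  exact Function.Periodic.int_mul hV j n

lemma transferMatrix_mul (hV : IsPeriodic V p) (E : ℝ) (k : ℕ) :
    transferMatrix V E (k * p) = transferMatrix V E p ^ k := by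
  induction k with
  | zero => rw [zero_mul, transferMatrix_zero, pow_zero]
  | succ k ih =>
    rw [Nat.succ_mul, transferMatrix_add, ih, pow_succ']
    push_cast
    simp only [hV.mul_add_eq]

lemma transferMatrix_mul_add (hV : IsPeriodic V p) (E : ℝ) (k r : ℕ) :
    transferMatrix V E (k * p + r) = transferMatrix V E r * transferMatrix V E p ^ k := by
  rw [transferMatrix_add, hV.transferMatrix_mul]
  push_cast
  simp only [hV.mul_add_eq]

end IsPeriodic

end TransferMatrix

section LyapunovExponent

open Topology Asymptotics
open scoped Matrix.Norms.L2Operator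

variable {V : ℤ → ℝ} {E μ : ℝ} {q : ℕ}

lemma mul_inv_eq_det_transferMatrix (hμ : 1 < |μ|) (V : ℤ → ℝ) (E : ℝ) (N : ℕ) :
    μ * μ⁻¹ = (transferMatrix V E N).det := by
  rw [mul_inv_cancel₀ (abs_pos.mp (one_pos.trans hμ)), det_transferMatrix]

lemma opNorm_eq_l2_opNorm (A : Matrix (Fin 2) (Fin 2) ℝ) : opNorm A = ‖A‖ := rfl

namespace IsPeriodic

lemma tendsto_log_opNorm_transferMatrix_sub (hV : IsPeriodic V q) (hμ : 1 < |μ|)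
    (hsum : μ + μ⁻¹ = (transferMatrix V E q).trace) (r : ℕ) :
    ∃ L, Tendsto (fun k : ℕ => Real.log (opNorm (transferMatrix V E (k * q + r)))
      - k * Real.log |μ|) atTop (𝓝 L) := by
  have hP : eigenProj (transferMatrix V E q) μ μ⁻¹ ≠ 0 := fun hzero => by
    have htrace := trace_eigenProj (ne_inv_of_one_lt_abs hμ) hsum
    rw [hzero, Matrix.trace_zero] at htrace
    exact zero_ne_one htrace
  have hunit : IsUnit (transferMatrix V E r) := by
    rw [Matrix.isUnit_iff_isUnit_det, det_transferMatrix]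
    exact isUnit_one
  have hlim := tendsto_log_norm_map_pow_sub hsum (mul_inv_eq_det_transferMatrix hμ V E q)
    (abs_inv_lt_abs hμ) (LinearMap.mulLeft ℝ (transferMatrix V E r))
    (by simpa [hunit.mul_right_eq_zero] using hP)
  refine ⟨_, hlim.congr fun k => ?_⟩
  rw [hV.transferMatrix_mul_add, opNorm_eq_l2_opNorm, LinearMap.mulLeft_apply, Real.norm_eq_abs]

lemma exists_abs_log_opNorm_transferMatrix_sub_le (hq : 0 < q) (hV : IsPeriodic V q)
    (hμ : 1 < |μ|) (hsum : μ + μ⁻¹ = (transferMatrix V E q).trace) :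
    ∃ C, ∀ N : ℕ,
      |Real.log (opNorm (transferMatrix V E N)) - (N / q : ℕ) * Real.log (|μ|)| ≤ C := by
  have hbdd (r : ℕ) : ∃ C, ∀ k : ℕ,
      |Real.log (opNorm (transferMatrix V E (k * q + r))) - k * Real.log (|μ|)| ≤ C := by
    obtain ⟨L, hL⟩ := hV.tendsto_log_opNorm_transferMatrix_sub hμ hsum r
    obtain ⟨C, hC⟩ := hL.abs.bddAbove_range
    exact ⟨C, fun k => hC ⟨k, rfl⟩⟩
  choose C hC using hbdd
  obtain ⟨D, hD⟩ := ((Finset.range q).image C).exists_le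
  refine ⟨D, fun N => ?_⟩
  have hN := hC (N % q) (N / q)
  rw [Nat.div_add_mod'] at hN
  exact hN.trans
    (hD _ (Finset.mem_image_of_mem C (Finset.mem_range.mpr (Nat.mod_lt N hq))))

lemma lyapExp_eq (hq : 0 < q) (hV : IsPeriodic V q) (hμ : 1 < |μ|)
    (hsum : μ + μ⁻¹ = (transferMatrix V E q).trace) : lyapExp V E = Real.log |μ| / q := by
  obtain ⟨C, hC⟩ := hV.exists_abs_log_opNorm_transferMatrix_sub_le hq hμ hsum
  have hq' : (0 : ℝ) < q := by exact_mod_cast hq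
  have hlog : 0 < Real.log |μ| := Real.log_pos hμ
  have hbigO : (fun N : ℕ => Real.log (opNorm (transferMatrix V E N))
      - Real.log |μ| / q * N) =O[atTop] fun _ => (1 : ℝ) := by
    refine IsBigO.of_bound (C + Real.log |μ|) (Eventually.of_forall fun N => ?_)
    have hN := hC N
    have hdiv : ((N / q : ℕ) : ℝ) ≤ N / q := Nat.cast_div_le
    have hdiv' : (N : ℝ) / q ≤ (N / q : ℕ) + 1 := by
      rw [div_le_iff₀ hq']
      exact_mod_cast (Nat.lt_mul_div_succ N hq).le.trans_eq (mul_comm _ _)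
    have hfloor : |(((N / q : ℕ) : ℝ) - N / q) * Real.log (|μ|)| ≤ Real.log |μ| := by
      rw [abs_mul, abs_of_pos hlog]
      exact mul_le_of_le_one_left hlog.le (abs_le.mpr ⟨by linarith, by linarith⟩)
    calc ‖Real.log (opNorm (transferMatrix V E N)) - Real.log |μ| / q * N‖
        = |(Real.log (opNorm (transferMatrix V E N)) - (N / q : ℕ) * Real.log |μ|)
            + (((N / q : ℕ) : ℝ) - N / q) * Real.log (|μ|)| := by
          rw [Real.norm_eq_abs]; congr 1; ring
      _ ≤ C + Real.log |μ| := (abs_add_le _ _).trans (add_le_add hN hfloor)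
      _ = (C + Real.log |μ|) * ‖(1 : ℝ)‖ := by rw [norm_one, mul_one]
  have hlim := tendsto_div_of_sub_isBigO_one tendsto_natCast_atTop_atTop hbigO
  refine (hlim.congr fun N => ?_).limsup_eq
  rw [logNormRate, one_div_mul_eq_div]

lemma abs_mul_lyapExp_sub_log_abs_trace_le (hq : 0 < q) (hV : IsPeriodic V q)
    (htrace : 2 < |(transferMatrix V E q).trace|) :
    |q * lyapExp V E - Real.log (|(transferMatrix V E q).trace|)| ≤ Real.log 2 := by
  obtain ⟨μ, hμ, hsum⟩ := exists_one_lt_abs_add_inv_eq htrace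
  have hlower : |μ| ≤ |(transferMatrix V E q).trace| := hsum ▸ abs_le_abs_add_inv μ
  have hupper : |(transferMatrix V E q).trace| ≤ 2 * |μ| := by
    have hinv : |μ⁻¹| ≤ 1 := (abs_inv μ).trans_le (inv_le_one_of_one_le₀ hμ.le)
    rw [← hsum]
    linarith [abs_add_le μ μ⁻¹]
  have hμ_pos : 0 < |μ| := one_pos.trans hμ
  have hlog_lower := Real.log_le_log hμ_pos hlower
  have hlog_upper := Real.log_le_log (two_pos.trans htrace) hupper
  rw [Real.log_mul two_ne_zero hμ_pos.ne'] at hlog_upper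
  rw [hV.lyapExp_eq hq hμ hsum, mul_div_cancel₀ _ (Nat.cast_ne_zero.mpr hq.ne'), abs_le]
  constructor <;> linarith [Real.log_pos one_lt_two]

end IsPeriodic

end LyapunovExponent

section HalfLineSolutions

open Topology

variable {V u : ℤ → ℝ} {E : ℝ} {p : ℕ}

/-- The eigenvalue equation `Hu = Eu` of the Schrödinger operator with potential `V`, at the single
site `n`. -/
def SolvesAt (V : ℤ → ℝ) (E : ℝ) (u : ℤ → ℝ) (n : ℤ) : Prop :=
  u (n + 1) + u (n - 1) + V n * u n = E * u n

/-- The vector `(u n, u (n - 1))` of Cauchy data at `n`, on which transfer matrices act. -/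
def cauchyData (u : ℤ → ℝ) (n : ℤ) : Fin 2 → ℝ :=
  ![u n, u (n - 1)]

lemma tendsto_cauchyData {l : Filter ℤ} (hl : Tendsto (fun n => n - 1) l l)
    (hu : Tendsto u l (𝓝 0)) : Tendsto (cauchyData u) l (𝓝 0) := by
  refine tendsto_pi_nhds.mpr fun i => ?_
  fin_cases i
  · exact hu
  · exact hu.comp hl

lemma SolvesAt.cauchyData_add_one {n : ℤ} (hu : SolvesAt V E u n) :
    cauchyData u (n + 1) = !![E - V n, -1; 1, 0] *ᵥ cauchyData u n := by
  have hnext : u (n + 1) = (E - V n) * u n - u (n - 1) := by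
    rw [SolvesAt] at hu
    linarith
  ext i
  fin_cases i
  · simpa [cauchyData, mul_comm, sub_eq_add_neg] using hnext
  · simp [cauchyData]

lemma cauchyData_add {n : ℤ} {r : ℕ} (hu : ∀ s : ℕ, s < r → SolvesAt V E u (n + s)) :
    cauchyData u (n + r) = transferMatrix (fun k => V (n + k)) E r *ᵥ cauchyData u n := by
  induction r with
  | zero => simp [transferMatrix_zero]
  | succ r ih =>
    rw [transferMatrix_succ, ← Matrix.mulVec_mulVec, ← ih fun s hs => hu s (by omega),
      ← (hu r r.lt_succ_self).cauchyData_add_one, Nat.cast_succ, add_assoc]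

namespace IsPeriodic

lemma cauchyData_succ_mul (hV : IsPeriodic V p) {j : ℤ}
    (hu : ∀ s : ℕ, s < p → SolvesAt V E u (j * p + s)) :
    cauchyData u ((j + 1) * p) = transferMatrix V E p *ᵥ cauchyData u (j * p) := by
  have hshift := cauchyData_add hu
  simp only [hV.mul_add_eq] at hshift
  rw [← hshift, add_one_mul]

lemma cauchyData_add_two_mul (hV : IsPeriodic V p) {j : ℤ}
    (hu : ∀ n, j * p ≤ n → n < (j + 2) * p → SolvesAt V E u n) :
    cauchyData u ((j + 2) * p) = (transferMatrix V E p).trace • cauchyData u ((j + 1) * p)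
      - cauchyData u (j * p) := by
  have hfst : cauchyData u ((j + 1) * p) = transferMatrix V E p *ᵥ cauchyData u (j * p) :=
    hV.cauchyData_succ_mul fun s hs => hu _ (by linarith) (by nlinarith)
  have hsnd : cauchyData u ((j + 2) * p) = transferMatrix V E p *ᵥ cauchyData u ((j + 1) * p) := by
    rw [← hV.cauchyData_succ_mul fun s hs => hu _ (by nlinarith) (by nlinarith), add_assoc,
      one_add_one_eq_two]
  rw [hsnd, hfst, Matrix.mulVec_mulVec, mul_self_eq_trace_smul_sub_det_smul_one,
    det_transferMatrix, one_smul, Matrix.sub_mulVec, Matrix.smul_mulVec, Matrix.one_mulVec]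

lemma cauchyData_eq_zero_of_tendsto_atTop (hp : 0 < p) (hV : IsPeriodic V p)
    (htrace : |(transferMatrix V E p).trace| ≤ 2) {a : ℤ} (hu : ∀ n, a ≤ n → SolvesAt V E u n)
    (hlim : Tendsto u atTop (𝓝 0)) : cauchyData u a = 0 := by
  have hp' : (0 : ℤ) < p := by exact_mod_cast hp
  obtain ⟨j, hj⟩ : ∃ j : ℤ, a ≤ j * p := ⟨|a|, by nlinarith [le_abs_self a, abs_nonneg a]⟩
  have hj_zero : cauchyData u (j * p) = 0 := by
    have hsites : Tendsto (fun k : ℕ => (j + k) * (p : ℤ)) atTop atTop :=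
      (tendsto_atTop_add_const_left _ j tendsto_natCast_atTop_atTop).atTop_mul_const' hp'
    have hdecay := tendsto_pi_nhds.mp
      ((tendsto_cauchyData (tendsto_atTop_add_const_right _ (-1) tendsto_id) hlim).comp hsites)
    ext i
    have := eq_zero_of_linear_recurrence_of_tendsto_zero htrace (fun k => ?_) (hdecay i)
    · simpa using this
    · have hrec := hV.cauchyData_add_two_mul (j := j + k) (fun n hn _ => hu n (by nlinarith))
      simpa [add_assoc] using congrFun hrec i
  obtain ⟨r, hr⟩ := Int.le.dest hj
  refine Matrix.eq_zero_of_mulVec_eq_zero (M := transferMatrix (fun k => V (a + k)) E r) ?_ ?_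
  · rw [det_transferMatrix]; exact one_ne_zero
  · rw [← cauchyData_add fun s _ => hu _ (by omega), hr, hj_zero]

lemma cauchyData_eq_zero_of_tendsto_atBot (hp : 0 < p) (hV : IsPeriodic V p)
    (htrace : |(transferMatrix V E p).trace| ≤ 2) {a : ℤ} (hu : ∀ n, n < a → SolvesAt V E u n)
    (hlim : Tendsto u atBot (𝓝 0)) : cauchyData u a = 0 := by
  have hp' : (0 : ℤ) < p := by exact_mod_cast hp
  obtain ⟨j, hj⟩ : ∃ j : ℤ, j * p ≤ a := ⟨-|a|, by nlinarith [neg_abs_le a, abs_nonneg a]⟩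
  have hj_zero : cauchyData u (j * p) = 0 := by
    have hsites : Tendsto (fun k : ℕ => (j - k) * (p : ℤ)) atTop atBot :=
      (tendsto_atBot_add_const_left _ j
        (tendsto_neg_atTop_atBot.comp tendsto_natCast_atTop_atTop)).atBot_mul_const' hp'
    have hdecay := tendsto_pi_nhds.mp
      ((tendsto_cauchyData (tendsto_atBot_add_const_right _ (-1) tendsto_id) hlim).comp hsites)
    ext i
    have := eq_zero_of_linear_recurrence_of_tendsto_zero htrace (fun k => ?_) (hdecay i)
    · simpa using this
    · have hrec := hV.cauchyData_add_two_mul (j := j - (k + 2 : ℕ))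
        (fun n _ hn => hu n (by push_cast at hn; nlinarith))
      have hindex₁ : j - (k + 2 : ℕ) + 1 = j - (k + 1 : ℕ) := by push_cast; ring
      have hindex₂ : j - (k + 2 : ℕ) + 2 = j - k := by push_cast; ring
      rw [hindex₁, hindex₂, eq_sub_iff_add_eq, add_comm, ← eq_sub_iff_add_eq] at hrec
      exact congrFun hrec i
  obtain ⟨r, hr⟩ := Int.le.dest hj
  rw [← hr, cauchyData_add fun s hs => hu _ (by omega), hj_zero, Matrix.mulVec_zero]

end IsPeriodic

end HalfLineSolutions

section Resolvent

open Topology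

lemma tendsto_norm_lp_cofinite_zero {ι : Type*} {F : ι → Type*} [∀ i, NormedAddCommGroup (F i)]
    {q : ENNReal} (hq : 0 < q.toReal) (φ : lp F q) :
    Tendsto (fun i => ‖φ i‖) cofinite (𝓝 0) := by
  have hpow := ((lp.memℓp φ).summable hq).tendsto_cofinite_zero
  have hroot := hpow.rpow_const (p := q.toReal⁻¹) (Or.inr (inv_pos.mpr hq).le)
  rw [Real.zero_rpow (inv_pos.mpr hq).ne'] at hroot
  exact hroot.congr fun i => Real.rpow_rpow_inv (norm_nonneg _) hq.ne'

variable {V : ℤ → ℝ} {H : lp (fun _ : ℤ => ℂ) 2 →L[ℂ] lp (fun _ : ℤ => ℂ) 2} {E : ℝ}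

lemma IsSchrodingerOp.exists_tendsto_zero_sub_eq_single (hH : IsSchrodingerOp V H)
    (hE : (E : ℂ) ∉ spectrum ℂ H) :
    ∃ u : ℤ → ℝ, Tendsto u cofinite (𝓝 0) ∧
      ∀ n, E * u n - (u (n + 1) + u (n - 1) + V n * u n) = Pi.single (M := fun _ => ℝ) 0 1 n := by
  obtain ⟨R, hR⟩ := spectrum.notMem_iff.mp hE
  let δ : lp (fun _ : ℤ => ℂ) 2 := lp.single 2 0 1
  let φ : lp (fun _ : ℤ => ℂ) 2 := R⁻¹.val δ
  have hφ : (E : ℂ) • φ - H φ = δ := by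
    have hcancel : (R.val * R⁻¹.val) δ = δ := by rw [R.mul_inv]; rfl
    rw [hR] at hcancel
    exact hcancel
  refine ⟨fun n => (φ n).re, squeeze_zero_norm (fun n => Complex.abs_re_le_norm _)
    (tendsto_norm_lp_cofinite_zero (by norm_num) φ), fun n => ?_⟩
  have hn : E * φ n - (φ (n + 1) + φ (n - 1) + V n * φ n) = δ n := by
    rw [← hH φ n, ← hφ]; rfl
  calc E * (φ n).re - ((φ (n + 1)).re + (φ (n - 1)).re + V n * (φ n).re)
      = (E * φ n - (φ (n + 1) + φ (n - 1) + V n * φ n)).re := by simp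
    _ = (Pi.single (M := fun _ => ℂ) 0 1 n).re := by rw [hn]; rfl
    _ = Pi.single (M := fun _ => ℝ) 0 1 n := by
      rcases eq_or_ne n 0 with rfl | hn0
      · simp
      · simp [hn0]

lemma IsSchrodingerOp.two_lt_abs_trace_transferMatrix {p : ℕ} (hp : 0 < p)
    (hV : IsPeriodic V p) (hH : IsSchrodingerOp V H) (hE : (E : ℂ) ∉ spectrum ℂ H) :
    2 < |(transferMatrix V E p).trace| := by
  by_contra! htrace
  obtain ⟨u, hlim, hu⟩ := hH.exists_tendsto_zero_sub_eq_single hE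
  rw [Int.cofinite_eq, tendsto_sup] at hlim
  have hsolves (n : ℤ) (hn : n ≠ 0) : SolvesAt V E u n := by
    have := hu n
    rw [Pi.single_eq_of_ne hn] at this
    exact (sub_eq_zero.mp this).symm
  have hleft : cauchyData u 0 = 0 :=
    hV.cauchyData_eq_zero_of_tendsto_atBot hp htrace (fun n hn => hsolves n hn.ne) hlim.1
  have hright : cauchyData u 1 = 0 :=
    hV.cauchyData_eq_zero_of_tendsto_atTop hp htrace (fun n hn => hsolves n (by omega)) hlim.2
  have hu_zero : u 0 = 0 := congrFun hleft 0
  have hu_pred : u (0 - 1) = 0 := congrFun hleft 1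
  have hu_succ : u (0 + 1) = 0 := congrFun hright 0
  have hzero := hu 0
  rw [hu_zero, hu_pred, hu_succ, Pi.single_eq_same] at hzero
  norm_num at hzero

end Resolvent

section Splice

open Topology Asymptotics

variable {V W : ℤ → ℝ} {E : ℝ} {p : ℕ}

/-- The potential `V̂_{m,h}` which, on each of its periods of length `(m + h) * p`, follows `V` on
the first `m * p` sites and `W` on the remaining `h * p` sites. -/
def splice (V W : ℤ → ℝ) (p m h : ℕ) (n : ℤ) : ℝ :=
  if n % (((m + h) * p : ℕ) : ℤ) < ((m * p : ℕ) : ℤ) then V n else W n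

lemma isPeriodic_splice (hV : IsPeriodic V p) (hW : IsPeriodic W p) (m h : ℕ) :
    IsPeriodic (splice V W p m h) ((m + h) * p) := by
  intro n
  have hshift {U : ℤ → ℝ} (hU : IsPeriodic U p) : U (n + ((m + h) * p : ℕ)) = U n := by
    rw [add_comm, Nat.cast_mul, hU.mul_add_eq]
  rw [splice, splice, hshift hV, hshift hW, Int.add_emod_right]

lemma transferMatrix_splice (hV : IsPeriodic V p) (hW : IsPeriodic W p) (E : ℝ) (m h : ℕ) :
    transferMatrix (splice V W p m h) E ((m + h) * p) =
      transferMatrix W E p ^ h * transferMatrix V E p ^ m := by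
  rw [← hV.transferMatrix_mul, ← hW.transferMatrix_mul, add_mul, transferMatrix_add]
  congr 1 <;> refine transferMatrix_congr fun n hn => ?_
  · have hmod : ((m * p : ℕ) + n : ℤ) % (((m + h) * p : ℕ) : ℤ) = (m * p : ℕ) + n :=
      Int.emod_eq_of_lt (by positivity) (by rw [add_mul]; omega)
    rw [splice, hmod, if_neg (by omega), Nat.cast_mul, hW.mul_add_eq]
  · have hmod : (n : ℤ) % (((m + h) * p : ℕ) : ℤ) = n :=
      Int.emod_eq_of_lt (by positivity) (by rw [add_mul]; omega)
    rw [splice, hmod, if_pos (by exact_mod_cast hn)]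

variable {μ : ℝ} {h : ℕ}

lemma tendsto_log_abs_trace_transferMatrix_splice_sub (hV : IsPeriodic V p) (hW : IsPeriodic W p)
    (hμ : 1 < |μ|) (hsum : μ + μ⁻¹ = (transferMatrix V E p).trace)
    (hoverlap : (transferMatrix W E p ^ h * eigenProj (transferMatrix V E p) μ μ⁻¹).trace ≠ 0) :
    ∃ L, Tendsto (fun m : ℕ =>
      Real.log |(transferMatrix (splice V W p m h) E ((m + h) * p)).trace| - m * Real.log |μ|)
      atTop (𝓝 L) := by
  have hlim := tendsto_log_norm_map_pow_sub hsum (mul_inv_eq_det_transferMatrix hμ V E p)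
    (abs_inv_lt_abs hμ) (Matrix.traceLinearMap (Fin 2) ℝ ℝ ∘ₗ
      LinearMap.mulLeft ℝ (transferMatrix W E p ^ h)) hoverlap
  refine ⟨_, hlim.congr fun m => ?_⟩
  rw [transferMatrix_splice hV hW]
  rfl

lemma tendsto_lyapExp_splice (hp : 0 < p) (hV : IsPeriodic V p) (hW : IsPeriodic W p)
    (hμ : 1 < |μ|) (hsum : μ + μ⁻¹ = (transferMatrix V E p).trace)
    (hoverlap : (transferMatrix W E p ^ h * eigenProj (transferMatrix V E p) μ μ⁻¹).trace ≠ 0) :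
    Tendsto (fun m => lyapExp (splice V W p m h) E) atTop (𝓝 (lyapExp V E)) := by
  obtain ⟨L, hL⟩ := tendsto_log_abs_trace_transferMatrix_splice_sub hV hW hμ hsum hoverlap
  set t : ℕ → ℝ := fun m => |(transferMatrix (splice V W p m h) E ((m + h) * p)).trace|
  set q : ℕ → ℝ := fun m => ((m + h) * p : ℕ)
  have hp_ne : (p : ℝ) ≠ 0 := Nat.cast_ne_zero.mpr hp.ne'
  have hq : Tendsto q atTop atTop := tendsto_natCast_atTop_atTop.comp
    ((tendsto_add_atTop_nat h).atTop_mul_const' hp)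
  have ht_large : ∀ᶠ m in atTop, 2 < t m := by
    have hlog : Tendsto (fun m => Real.log (t m)) atTop atTop :=
      (hL.add_atTop (tendsto_natCast_atTop_atTop.atTop_mul_const (Real.log_pos hμ))).congr
        fun m => sub_add_cancel _ _
    exact (hlog.eventually_gt_atTop 2).mono fun m hm =>
      hm.trans_le (Real.log_le_self (abs_nonneg _))
  have hexponent : (fun m => q m * lyapExp (splice V W p m h) E - Real.log (t m)) =O[atTop]
      fun _ => (1 : ℝ) := by
    refine IsBigO.of_bound (Real.log 2) ?_
    filter_upwards [ht_large, eventually_gt_atTop 0] with m hm hm_pos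
    rw [norm_one, mul_one]
    exact (isPeriodic_splice hV hW m h).abs_mul_lyapExp_sub_log_abs_trace_le (by positivity) hm
  have hbigO : (fun m => q m * lyapExp (splice V W p m h) E - lyapExp V E * q m) =O[atTop]
      fun _ => (1 : ℝ) := by
    refine ((hexponent.add (hL.isBigO_one ℝ)).sub
      (isBigO_const_const (h * Real.log |μ|) one_ne_zero atTop)).congr_left fun m => ?_
    rw [hV.lyapExp_eq hp hμ hsum]
    simp only [q]
    push_cast
    field_simp [hp_ne]
    ring
  refine (tendsto_div_of_sub_isBigO_one hq hbigO).congr' ?_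
  filter_upwards [hq.eventually_ne_atTop 0] with m hm
  exact mul_div_cancel_left₀ _ hm

end Splice

theorem statement11_general (ptil : ℕ) (hptil : 1 ≤ ptil) (V W : ℤ → ℝ)
    (hV : IsPeriodic V ptil) (hW : IsPeriodic W ptil)
    (H : lp (fun _ : ℤ => ℂ) 2 →L[ℂ] lp (fun _ : ℤ => ℂ) 2)
    (hH : IsSchrodingerOp V H) (E : ℝ) (hE : (E : ℂ) ∉ spectrum ℂ H) :
    ∃ h ∈ ({1, 2} : Set ℕ),
      Tendsto (fun m : ℕ => lyapExp (splice V W ptil m h) E) atTop (nhds (lyapExp V E)) := by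
  obtain ⟨μ, hμ, hsum⟩ :=
    exists_one_lt_abs_add_inv_eq (hH.two_lt_abs_trace_transferMatrix hptil hV hE)
  obtain ⟨h, hh, hoverlap⟩ := exists_trace_pow_mul_ne_zero
    (A := transferMatrix W E ptil) (P := eigenProj (transferMatrix V E ptil) μ μ⁻¹)
    (by simp [det_transferMatrix])
    (by simp [trace_eigenProj (ne_inv_of_one_lt_abs hμ) hsum])
  exact ⟨h, hh, tendsto_lyapExp_splice hptil hV hW hμ hsum hoverlap⟩

/-- for `E` outside the spectrum there is `h ∈ {1,2}` so that the
Lyapunov exponent of the modified periodic potentials `V̂_{m,h}` converges to that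
of `V` as `m → ∞`. -/
theorem statement11 (ptil : ℕ) (hptil : 1 ≤ ptil) (V : ℤ → ℝ)
    (hper : IsPeriodic V ptil)
    (H : lp (fun _ : ℤ => ℂ) 2 →L[ℂ] lp (fun _ : ℤ => ℂ) 2)
    (hH : IsSchrodingerOp V H) (E : ℝ) (hE : (E : ℂ) ∉ spectrum ℂ H) (c : ℝ)
    (Vhat : ℕ → ℕ → ℤ → ℝ)
    (hVhat : ∀ m h : ℕ, 1 ≤ m → 1 ≤ h → ∀ n : ℤ,
      Vhat m h n =
        if n % (((m + h) * ptil : ℕ) : ℤ) < ((m * ptil : ℕ) : ℤ)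
        then V n else V n - c) :
    ∃ h ∈ ({1, 2} : Set ℕ),
      Filter.Tendsto (fun m : ℕ => lyapExp (Vhat m h) E) Filter.atTop
        (nhds (lyapExp V E)) := by
  obtain ⟨h, hh, hlim⟩ := statement11_general ptil hptil V (fun n => V n - c) hper
    (fun n => congrArg (· - c) (hper n)) H hH E hE
  have hh_pos : 1 ≤ h := by rcases hh with rfl | rfl <;> norm_num
  exact ⟨h, hh, hlim.congr' <| (eventually_ge_atTop 1).mono fun m hm =>
    congrArg (lyapExp · E) (funext (hVhat m h hm hh_pos)).symm⟩
end

section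
/- Let V : ℤ → ℝ be p-periodic (p ≥ 1) with Schrödinger operator H, and let E ∈ ℝ satisfy (E : ℂ) ∈ σ(H). Then lim_{N→∞} (1/N)·log‖A_N(E,V)‖ = 0. -/
open Filter Matrix

/-! Let `D` be the Floquet discriminant, a polynomial in the spectral parameter. The unit vectors
`δₙ` satisfy `H δₙ = δₙ₊₁ + δₙ₋₁ + V(n) δₙ`, so they solve the eigenvalue equation with parameter
`X` in the `ℂ[X]`-module on which `X` acts as `H`. Floquet theory in this module yields
`D(H) δₙ = δₙ₊ₚ + δₙ₋ₚ`: the operator `D(H)` is a sum of two shifts, of norm at most `2`, and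
`|D(E)| ≤ 2` on the spectrum by spectral mapping. The transfer matrix over one period then has
determinant `1` and trace in `[-2, 2]`, so its powers grow at most linearly by bounds on Chebyshev
polynomials, while a matrix of determinant `1` has norm at least `1`. -/

section Cocycle

variable {R S : Type*} [CommRing R] [CommRing S]

/-- The one-step transfer matrix at site `n`, with spectral parameter `x` and potential `v`. The
coefficient ring is arbitrary so that `x` can be the indeterminate of a polynomial ring. -/
def schrodingerStep (x : R) (v : ℤ → R) (n : ℤ) : Matrix (Fin 2) (Fin 2) R :=
  !![x - v n, -1; 1, 0]

/-- The Schrödinger cocycle: the product of the one-step transfer matrices at the sites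
`n, n + 1, …, n + N - 1`, later sites to the left. -/
def schrodingerCocycle (x : R) (v : ℤ → R) (n : ℤ) : ℕ → Matrix (Fin 2) (Fin 2) R
  | 0 => 1
  | N + 1 => schrodingerStep x v (n + N) * schrodingerCocycle x v n N

/-- The Floquet discriminant: the trace of the cocycle over one period. -/
def floquetDiscriminant (x : R) (v : ℤ → R) (p : ℕ) : R :=
  (schrodingerCocycle x v 0 p).trace

lemma det_schrodingerStep (x : R) (v : ℤ → R) (n : ℤ) : (schrodingerStep x v n).det = 1 := by
  simp [schrodingerStep, det_fin_two]

lemma det_schrodingerCocycle (x : R) (v : ℤ → R) (n : ℤ) (N : ℕ) :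
    (schrodingerCocycle x v n N).det = 1 := by
  induction N with
  | zero => simp [schrodingerCocycle]
  | succ N ih => simp [schrodingerCocycle, det_schrodingerStep, ih]

lemma schrodingerCocycle_one (x : R) (v : ℤ → R) (n : ℤ) :
    schrodingerCocycle x v n 1 = schrodingerStep x v n := by
  simp [schrodingerCocycle]

lemma schrodingerCocycle_add (x : R) (v : ℤ → R) (n : ℤ) (N M : ℕ) :
    schrodingerCocycle x v n (N + M) =
      schrodingerCocycle x v (n + N) M * schrodingerCocycle x v n N := by
  induction M with
  | zero => simp [schrodingerCocycle]
  | succ M ih => simp [schrodingerCocycle, ← add_assoc, ih, Matrix.mul_assoc]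

lemma map_schrodingerCocycle (f : R →+* S) (x : R) (v : ℤ → R) (n : ℤ) (N : ℕ) :
    (schrodingerCocycle x v n N).map f = schrodingerCocycle (f x) (f ∘ v) n N := by
  induction N with
  | zero => simp [schrodingerCocycle]
  | succ N ih =>
    have hstep : (schrodingerStep x v (n + N)).map f = schrodingerStep (f x) (f ∘ v) (n + N) := by
      ext i j
      fin_cases i <;> fin_cases j <;> simp [schrodingerStep]
    simp only [schrodingerCocycle, Matrix.map_mul, ih, hstep]

lemma map_floquetDiscriminant (f : R →+* S) (x : R) (v : ℤ → R) (p : ℕ) :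
    f (floquetDiscriminant x v p) = floquetDiscriminant (f x) (f ∘ v) p := by
  rw [floquetDiscriminant, floquetDiscriminant, ← map_schrodingerCocycle]
  exact AddMonoidHom.map_trace f _

variable {v : ℤ → R} {p : ℕ}

lemma schrodingerCocycle_add_period (hv : v.Periodic p) (x : R) (n : ℤ) (N : ℕ) :
    schrodingerCocycle x v (n + p) N = schrodingerCocycle x v n N := by
  induction N with
  | zero => rfl
  | succ N ih =>
    have hstep : schrodingerStep x v (n + p + N) = schrodingerStep x v (n + N) := by
      rw [schrodingerStep, schrodingerStep, add_right_comm, hv]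
    simp only [schrodingerCocycle, hstep, ih]

lemma schrodingerCocycle_mul_add (hv : v.Periodic p) (x : R) (n : ℤ) (k r : ℕ) :
    schrodingerCocycle x v n (k * p + r) =
      schrodingerCocycle x v n r * schrodingerCocycle x v n p ^ k := by
  induction k with
  | zero => simp
  | succ k ih =>
    rw [show (k + 1) * p + r = p + (k * p + r) by ring, schrodingerCocycle_add,
      schrodingerCocycle_add_period hv, ih, pow_succ, Matrix.mul_assoc]

/-- Shifting the starting site by one conjugates the cocycle over a period by a one-step matrix. -/
lemma trace_schrodingerCocycle (hv : v.Periodic p) (x : R) (n : ℤ) :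
    (schrodingerCocycle x v n p).trace = floquetDiscriminant x v p := by
  have hstep (m : ℤ) : (schrodingerCocycle x v (m + 1) p).trace =
      (schrodingerCocycle x v m p).trace := by
    set A := schrodingerStep x v m
    have hA : IsUnit A.det := by simp [A, det_schrodingerStep]
    have hconj : schrodingerCocycle x v (m + 1) p * A = A * schrodingerCocycle x v m p := by
      have hleft := schrodingerCocycle_add x v m 1 p
      have hright := schrodingerCocycle_add x v m p 1
      rw [schrodingerCocycle_add_period hv, schrodingerCocycle_one] at hright
      rw [add_comm, hright, schrodingerCocycle_one, Nat.cast_one] at hleft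
      exact hleft.symm
    rw [← Matrix.mul_nonsing_inv_cancel_right _ (schrodingerCocycle x v (m + 1) p) hA, hconj,
      Matrix.trace_conj ((Matrix.isUnit_iff_isUnit_det A).mpr hA)]
  simpa only [mul_one, Int.cast_id] using!
    Function.Periodic.int_mul_eq (f := fun m => (schrodingerCocycle x v m p).trace) hstep n

end Cocycle

lemma sq_eq_trace_smul_sub_det_smul_one {R : Type*} [CommRing R] (A : Matrix (Fin 2) (Fin 2) R) :
    A ^ 2 = A.trace • A - A.det • 1 := by
  ext i j
  fin_cases i <;> fin_cases j <;>
    simp [sq, Matrix.mul_apply, trace_fin_two, det_fin_two] <;> ring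

section Solution

open scoped Matrix.Module

variable {R M : Type*} [CommRing R] [AddCommGroup M] [Module R M] {x : R} {v : ℤ → R} {u : ℤ → M}

lemma schrodingerCocycle_smul_solution
    (hu : ∀ n, x • u n = u (n + 1) + u (n - 1) + v n • u n) (n : ℤ) (N : ℕ) :
    schrodingerCocycle x v n N • ![u n, u (n - 1)] = ![u (n + N), u (n + N - 1)] := by
  induction N with
  | zero => simp [schrodingerCocycle]
  | succ N ih =>
    rw [schrodingerCocycle, mul_smul, ih]
    ext i
    fin_cases i
    · simp [schrodingerStep, sub_smul, hu, ← add_assoc]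
    · simp [schrodingerStep, ← add_assoc]

/-- Floquet theory: this is the Cayley–Hamilton identity `T² - (tr T) T + 1 = 0` for the cocycle
`T` over one period, applied to the solution one period earlier. -/
lemma floquetDiscriminant_smul_solution {p : ℕ} (hv : v.Periodic p)
    (hu : ∀ n, x • u n = u (n + 1) + u (n - 1) + v n • u n) (n : ℤ) :
    floquetDiscriminant x v p • u n = u (n + p) + u (n - p) := by
  set T := schrodingerCocycle x v (n - p) p with hT
  have hTn : schrodingerCocycle x v n p = T := by
    rw [hT, ← schrodingerCocycle_add_period hv x (n - p), sub_add_cancel]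
  have hprev : T • ![u (n - p), u (n - p - 1)] = ![u n, u (n - 1)] := by
    simpa using schrodingerCocycle_smul_solution hu (n - p) p
  have hnext : T • ![u n, u (n - 1)] = ![u (n + p), u (n + p - 1)] :=
    hTn ▸ schrodingerCocycle_smul_solution hu n p
  have hCH := congrArg (· • ![u (n - p), u (n - p - 1)]) (sq_eq_trace_smul_sub_det_smul_one T)
  simp only [hT, trace_schrodingerCocycle hv, det_schrodingerCocycle] at hCH
  rw [← hT, sq, mul_smul, hprev, hnext, one_smul, sub_smul, one_smul, smul_assoc, hprev] at hCH
  have h0 := congrFun hCH 0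
  simp only [cons_val_zero, smul_cons, smul_empty, Pi.sub_apply] at h0
  rw [h0, sub_add_cancel]

end Solution

section Spectrum

open Polynomial
open scoped ENNReal

lemma memℓp_comp_equiv {α β E : Type*} [NormedAddCommGroup E] {q : ℝ≥0∞} (e : α ≃ β) {f : β → E}
    (hf : Memℓp f q) : Memℓp (f ∘ e) q := by
  rcases q.trichotomy with rfl | rfl | hq
  · rw [memℓp_zero_iff] at hf ⊢
    exact hf.preimage e.injective.injOn
  · rw [memℓp_infty_iff] at hf ⊢
    exact hf.mono (Set.range_comp_subset_range e fun b => ‖f b‖)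
  · rw [memℓp_gen_iff hq] at hf ⊢
    exact e.summable_iff.mpr hf

variable {𝕜 : Type*} [NontriviallyNormedField 𝕜] {q : ℝ≥0∞} [Fact (1 ≤ q)]

/-- Reindexing of scalar sequences along a bijection, as a linear isometry of `ℓ^q` spaces. Taking
`e = Equiv.addRight k` gives the shift by `k` on sequences over `ℤ`. -/
noncomputable def lpCompEquiv {α β : Type*} (e : α ≃ β) :
    lp (fun _ : β => 𝕜) q →ₗᵢ[𝕜] lp (fun _ : α => 𝕜) q where
  toFun f := ⟨f ∘ e, memℓp_comp_equiv e (lp.memℓp f)⟩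
  map_add' _ _ := rfl
  map_smul' _ _ := rfl
  norm_map' f := by
    rcases q.trichotomy with rfl | rfl | hq
    · exact absurd (Fact.out : (1 : ℝ≥0∞) ≤ 0) (by simp)
    · simp only [lp.norm_eq_ciSup]
      exact e.iSup_comp (g := fun b => ‖f b‖)
    · simp only [lp.norm_eq_tsum_rpow hq]
      congr 1
      exact e.tsum_eq fun b => ‖f b‖ ^ q.toReal

@[simp]
lemma lpCompEquiv_apply {α β : Type*} (e : α ≃ β) (f : lp (fun _ : β => 𝕜) q) (i : α) :
    lpCompEquiv e f i = f (e i) :=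
  rfl

lemma lpCompEquiv_single {α β : Type*} [DecidableEq α] [DecidableEq β] (e : α ≃ β) (b : β)
    (a : 𝕜) : lpCompEquiv e (lp.single q b a) = lp.single q (e.symm b) a := by
  ext i
  simp [Pi.single_apply, e.eq_symm_apply]

variable {v : ℤ → 𝕜} {p : ℕ} {H : lp (fun _ : ℤ => 𝕜) q →L[𝕜] lp (fun _ : ℤ => 𝕜) q}

lemma schrodinger_apply_single
    (hH : ∀ ψ n, H ψ n = ψ (n + 1) + ψ (n - 1) + v n * ψ n) (n : ℤ) (a : 𝕜) :
    H (lp.single q n a) =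
      lp.single q (n + 1) a + lp.single q (n - 1) a + v n • lp.single q n a := by
  ext m
  have hadd : m + 1 = n ↔ m = n - 1 := by omega
  have hsub : m - 1 = n ↔ m = n + 1 := by omega
  rw [hH]
  simp only [lp.coeFn_add, lp.coeFn_smul, Pi.add_apply, Pi.smul_apply, lp.single_apply,
    Pi.single_apply, smul_eq_mul, hadd, hsub]
  obtain rfl | hmn := eq_or_ne m n
  · simp
  · simp [hmn, add_comm]

lemma aeval_floquetDiscriminant (hq : q ≠ ⊤) (hv : v.Periodic p)
    (hH : ∀ ψ n, H ψ n = ψ (n + 1) + ψ (n - 1) + v n * ψ n) :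
    aeval H (floquetDiscriminant X (C ∘ v) p) =
      (lpCompEquiv (Equiv.addRight (p : ℤ))).toContinuousLinearMap +
        (lpCompEquiv (Equiv.addRight (-p : ℤ))).toContinuousLinearMap := by
  refine lp.ext_continuousLinearMap hq fun n => ContinuousLinearMap.ext fun a => ?_
  have : IsScalarTower 𝕜 (lp (fun _ : ℤ => 𝕜) q →L[𝕜] lp (fun _ : ℤ => 𝕜) q)
      (lp (fun _ : ℤ => 𝕜) q) := ⟨fun _ _ _ => rfl⟩
  let u (m : ℤ) := Module.AEval.of 𝕜 (lp (fun _ : ℤ => 𝕜) q) H (lp.single q m a)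
  have hu (m : ℤ) : (X : 𝕜[X]) • u m = u (m + 1) + u (m - 1) + C (v m) • u m := by
    simp only [u, Module.AEval.X_smul_of, Module.AEval.C_smul, ← map_smul, ← map_add]
    exact congrArg _ (schrodinger_apply_single hH m a)
  have hD := floquetDiscriminant_smul_solution (hv.comp C) hu n
  simp only [u, ← Module.AEval.of_aeval_smul, ← map_add] at hD
  simpa [lpCompEquiv_single, add_comm, sub_eq_add_neg] using
    (Module.AEval.of 𝕜 _ H).injective hD

theorem norm_floquetDiscriminant_le_two [CompleteSpace 𝕜] (hq : q ≠ ⊤) (hv : v.Periodic p)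
    (hH : ∀ ψ n, H ψ n = ψ (n + 1) + ψ (n - 1) + v n * ψ n) {z : 𝕜} (hz : z ∈ spectrum 𝕜 H) :
    ‖floquetDiscriminant z v p‖ ≤ 2 := by
  set D : 𝕜[X] := floquetDiscriminant X (C ∘ v) p with hD
  have heval : D.eval z = floquetDiscriminant z v p := by
    rw [hD, ← coe_evalRingHom, map_floquetDiscriminant]
    congr 1
    · simp
    · ext; simp
  have hnorm : ‖aeval H D‖ ≤ 2 := by
    rw [hD, aeval_floquetDiscriminant hq hv hH, ← one_add_one_eq_two]
    exact norm_add_le_of_le (LinearIsometry.norm_toContinuousLinearMap_le _)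
      (LinearIsometry.norm_toContinuousLinearMap_le _)
  have hmem : D.eval z ∈ spectrum 𝕜 (aeval H D) :=
    spectrum.subset_polynomial_aeval H D ⟨z, hz, rfl⟩
  calc ‖floquetDiscriminant z v p‖ = ‖D.eval z‖ := by rw [heval]
    _ ≤ ‖aeval H D‖ * ‖(1 : lp (fun _ : ℤ => 𝕜) q →L[𝕜] lp (fun _ : ℤ => 𝕜) q)‖ :=
      spectrum.norm_le_norm_mul_of_mem hmem
    _ ≤ 2 * 1 := by
      gcongr
      exact ContinuousLinearMap.norm_id_le
    _ = 2 := mul_one 2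

end Spectrum

section Growth

open Polynomial

lemma abs_eval_chebyshev_U_le {x : ℝ} (hx : |x| ≤ 1) (n : ℕ) :
    |(Chebyshev.U ℝ n).eval x| ≤ n + 1 := by
  induction n with
  | zero => simp
  | succ n ih =>
    push_cast
    rw [Chebyshev.U_eq_X_mul_U_add_T, eval_add, eval_mul, eval_X]
    calc |x * (Chebyshev.U ℝ n).eval x + (Chebyshev.T ℝ (n + 1)).eval x|
        ≤ |x| * |(Chebyshev.U ℝ n).eval x| + |(Chebyshev.T ℝ (n + 1)).eval x| :=
          (abs_add_le _ _).trans_eq (by rw [abs_mul])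
      _ ≤ 1 * (n + 1) + 1 := by
          gcongr
          exact Chebyshev.abs_eval_T_real_le_one _ hx
      _ = n + 1 + 1 := by ring

lemma abs_eval_chebyshev_S_sub_one_le {t : ℝ} (ht : |t| ≤ 2) (k : ℕ) :
    |(Chebyshev.S ℝ (k - 1)).eval t| ≤ k := by
  cases k with
  | zero => simp
  | succ n =>
    have hhalf : |t / 2| ≤ 1 := by rw [abs_div, abs_two]; linarith
    simpa [← Chebyshev.S_comp_two_mul_X, mul_div_cancel₀] using abs_eval_chebyshev_U_le hhalf n

lemma pow_eq_chebyshev_S_of_det_eq_one {R : Type*} [CommRing R] {A : Matrix (Fin 2) (Fin 2) R}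
    (hA : A.det = 1) (k : ℕ) :
    A ^ k =
      (Chebyshev.S R (k - 1)).eval A.trace • A - (Chebyshev.S R (k - 2)).eval A.trace • 1 := by
  induction k with
  | zero => simp
  | succ k ih =>
    have hS : (Chebyshev.S R k).eval A.trace = A.trace * (Chebyshev.S R (k - 1)).eval A.trace -
        (Chebyshev.S R (k - 2)).eval A.trace := by
      rw [Chebyshev.S_eq, eval_sub, eval_mul, eval_X]
    rw [pow_succ, ih, sub_mul, smul_mul_assoc, smul_mul_assoc, one_mul, ← sq,
      sq_eq_trace_smul_sub_det_smul_one, hA, Nat.cast_succ, add_sub_cancel_right, hS,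
      show (k : ℤ) + 1 - 2 = k - 1 by ring]
    module

open scoped Matrix.Norms.L2Operator

lemma norm_pow_le_of_abs_trace_le_two {A : Matrix (Fin 2) (Fin 2) ℝ} (hdet : A.det = 1)
    (htr : |A.trace| ≤ 2) (k : ℕ) : ‖A ^ k‖ ≤ (k + 1) * (‖A‖ + 1) := by
  cases k with
  | zero => simp
  | succ k =>
    have hA := abs_eval_chebyshev_S_sub_one_le htr (k + 1)
    have hone := abs_eval_chebyshev_S_sub_one_le htr k
    rw [pow_eq_chebyshev_S_of_det_eq_one hdet,
      show ((k + 1 : ℕ) : ℤ) - 2 = k - 1 by push_cast; ring]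
    refine (norm_sub_le _ _).trans ?_
    rw [norm_smul, norm_smul, norm_one, Real.norm_eq_abs, Real.norm_eq_abs, mul_add]
    gcongr <;> push_cast at * <;> linarith

lemma schrodingerCocycle_isBigO_natCast {v : ℤ → ℝ} {p : ℕ} {E : ℝ} (hp : 1 ≤ p) (hv : v.Periodic p)
    (hE : |floquetDiscriminant E v p| ≤ 2) :
    schrodingerCocycle E v 0 =O[atTop] (fun N : ℕ => (N : ℝ)) := by
  set T := schrodingerCocycle E v 0
  set B := ∑ r ∈ Finset.range p, ‖T r‖
  have hB (N : ℕ) : ‖T (N % p)‖ ≤ B :=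
    Finset.single_le_sum (f := fun r => ‖T r‖) (fun _ _ => norm_nonneg _)
      (Finset.mem_range.mpr (Nat.mod_lt N hp))
  refine .of_bound (B * (2 * (‖T p‖ + 1))) ?_
  filter_upwards [eventually_ge_atTop 1] with N hN
  have hquot : ((N / p : ℕ) : ℝ) + 1 ≤ 2 * N := by
    have := Nat.div_le_self N p
    exact_mod_cast (by omega : N / p + 1 ≤ 2 * N)
  calc ‖T N‖ = ‖T (N % p) * T p ^ (N / p)‖ := by
        rw [← schrodingerCocycle_mul_add hv, Nat.div_add_mod']
    _ ≤ ‖T (N % p)‖ * ‖T p ^ (N / p)‖ := norm_mul_le _ _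
    _ ≤ B * ((((N / p : ℕ) : ℝ) + 1) * (‖T p‖ + 1)) := by
        gcongr
        · exact hB N
        · exact norm_pow_le_of_abs_trace_le_two (det_schrodingerCocycle ..) hE _
    _ ≤ B * (2 * N * (‖T p‖ + 1)) := by gcongr
    _ = B * (2 * (‖T p‖ + 1)) * ‖(N : ℝ)‖ := by rw [RCLike.norm_natCast]; ring

lemma abs_det_le_sq_l2_opNorm (A : Matrix (Fin 2) (Fin 2) ℝ) : |A.det| ≤ ‖A‖ ^ 2 := by
  set J : Matrix (Fin 2) (Fin 2) ℝ := !![0, 1; -1, 0]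
  have hJ : 0 < ‖J‖ := norm_pos_iff.mpr fun h => by simpa [J] using congrFun₂ h 0 1
  have hJdet : A * J * Aᵀ = A.det • J := by
    ext i j
    fin_cases i <;> fin_cases j <;>
      simp [J, Matrix.mul_apply, det_fin_two] <;> ring
  have hT : ‖Aᵀ‖ = ‖A‖ := by
    rw [← conjTranspose_eq_transpose_of_trivial, l2_opNorm_conjTranspose]
  refine le_of_mul_le_mul_right ?_ hJ
  calc |A.det| * ‖J‖ = ‖A * J * Aᵀ‖ := by rw [hJdet, norm_smul, Real.norm_eq_abs]
    _ ≤ ‖A‖ * ‖J‖ * ‖Aᵀ‖ := norm_mul₃_le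
    _ = ‖A‖ ^ 2 * ‖J‖ := by rw [hT]; ring

lemma one_le_norm_schrodingerCocycle (v : ℤ → ℝ) (E : ℝ) (n : ℤ) (N : ℕ) :
    1 ≤ ‖schrodingerCocycle E v n N‖ := by
  have hdet := abs_det_le_sq_l2_opNorm (schrodingerCocycle E v n N)
  rw [det_schrodingerCocycle, abs_one] at hdet
  exact (one_le_sq_iff₀ (norm_nonneg _)).mp hdet

lemma tendsto_one_div_mul_log_of_isBigO {a : ℕ → ℝ} (ha : ∀ᶠ N in atTop, 1 ≤ a N)
    (hO : a =O[atTop] (fun N : ℕ => (N : ℝ))) :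
    Tendsto (fun N : ℕ => 1 / (N : ℝ) * Real.log (a N)) atTop (nhds 0) := by
  obtain ⟨C, hC, haC⟩ := hO.exists_pos
  have hlog : Tendsto (fun N : ℕ => 1 / (N : ℝ) * Real.log (C * N)) atTop (nhds 0) := by
    have hCN : Tendsto (fun N : ℕ => C * (N : ℝ)) atTop atTop :=
      tendsto_natCast_atTop_atTop.const_mul_atTop hC
    have := (Real.isLittleO_log_id_atTop.comp_tendsto hCN).tendsto_div_nhds_zero.const_mul C
    rw [mul_zero] at this
    refine this.congr fun N => ?_
    simp only [Function.comp_apply, id]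
    rw [mul_div_assoc', mul_div_mul_left _ _ hC.ne', one_div_mul_eq_div]
  refine squeeze_zero' ?_ ?_ hlog
  · filter_upwards [ha] with N hN
    exact mul_nonneg (by positivity) (Real.log_nonneg hN)
  · filter_upwards [ha, haC.bound] with N hN hNC
    rw [RCLike.norm_natCast] at hNC
    gcongr
    exact (le_abs_self _).trans hNC

lemma transferMatrix_eq_schrodingerCocycle (V : ℤ → ℝ) (E : ℝ) (N : ℕ) :
    transferMatrix V E N = schrodingerCocycle E V 0 N := by
  induction N with
  | zero => simp [transferMatrix, schrodingerCocycle]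
  | succ N ih =>
    rw [schrodingerCocycle, ← ih, transferMatrix, transferMatrix, schrodingerStep]
    simp only [bind_pure_comp, List.map_eq_map]
    rw [List.range_succ_eq_map]
    simp [Function.comp_def]

lemma logNormRate_eq_log_norm_schrodingerCocycle (V : ℤ → ℝ) (E : ℝ) (N : ℕ) :
    logNormRate V E N = 1 / (N : ℝ) * Real.log ‖schrodingerCocycle E V 0 N‖ := by
  rw [logNormRate, transferMatrix_eq_schrodingerCocycle]
  rfl

theorem tendsto_logNormRate_of_abs_floquetDiscriminant_le_two {V : ℤ → ℝ} {p : ℕ} {E : ℝ}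
    (hp : 1 ≤ p) (hV : V.Periodic p) (hE : |floquetDiscriminant E V p| ≤ 2) :
    Tendsto (logNormRate V E) atTop (nhds 0) := by
  refine (tendsto_one_div_mul_log_of_isBigO
    (.of_forall fun N => one_le_norm_schrodingerCocycle V E 0 N)
    (schrodingerCocycle_isBigO_natCast hp hV hE).norm_left).congr fun N => ?_
  exact (logNormRate_eq_log_norm_schrodingerCocycle V E N).symm

end Growth

theorem statement14_general {𝕜 : Type*} [RCLike 𝕜] {q : ENNReal} [Fact (1 ≤ q)] (hq : q ≠ ⊤)
    {V : ℤ → ℝ} {p : ℕ} (hp : 1 ≤ p) (hV : V.Periodic p)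
    {H : lp (fun _ : ℤ => 𝕜) q →L[𝕜] lp (fun _ : ℤ => 𝕜) q}
    (hH : ∀ ψ n, H ψ n = ψ (n + 1) + ψ (n - 1) + algebraMap ℝ 𝕜 (V n) * ψ n) {E : ℝ}
    (hE : algebraMap ℝ 𝕜 E ∈ spectrum 𝕜 H) :
    Tendsto (fun N : ℕ => logNormRate V E N) atTop (nhds 0) := by
  have hdisc := norm_floquetDiscriminant_le_two hq (hV.comp (algebraMap ℝ 𝕜)) hH hE
  rw [← map_floquetDiscriminant, norm_algebraMap', Real.norm_eq_abs] at hdisc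
  exact tendsto_logNormRate_of_abs_floquetDiscriminant_le_two hp hV hdisc

/-- for a periodic potential the Lyapunov exponent vanishes on the
spectrum: `(1/N) log‖A_N(E,V)‖ → 0`. -/
theorem statement14 (V : ℤ → ℝ) (p : ℕ) (hp : 1 ≤ p) (hper : IsPeriodic V p)
    (H : lp (fun _ : ℤ => ℂ) 2 →L[ℂ] lp (fun _ : ℤ => ℂ) 2)
    (hH : IsSchrodingerOp V H) (E : ℝ) (hE : (E : ℂ) ∈ spectrum ℂ H) :
    Filter.Tendsto (fun N : ℕ => logNormRate V E N) Filter.atTop (nhds 0) := by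
  exact statement14_general ENNReal.ofNat_ne_top hp hper hH hE
end
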